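/- arXiv:1511.04761 — 2 statements merged into one kernel-verified Lean document; each statement's English description precedes it below -/
import Mathlib

section
/- A non-empty subset Q of l_∞(I) is injective (as a metric space with the induced metric) if and only if there exist subsets L, U of I and, for each i ∈ L, a 1-Lipschitz function r̲_i : l_∞(I∖{i}) → ℝ, and for each i ∈ U, a 1-Lipschitz function r̄_i : l_∞(I∖{i}) → ℝ, with r̲_i(y) ≤ r̄_i(y) for all y whenever i ∈ L ∩ U, such that Q = { x ∈ l_∞(I) : r̲_i(π̂_i(x)) ≤ x_i for all i ∈ L, and x_i ≤ r̄_i(π̂_i(x)) for all i ∈ U }. -/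
universe u v w

/-- A metric space `X` is injective if for every pair of metric spaces `A`, `B`, every
isometric embedding `ι : A → B` and every `1`-Lipschitz map `f : A → X`, there is a
`1`-Lipschitz map `g : B → X` with `g ∘ ι = f`. -/
def IsInjectiveMetricSpace (X : Type u) [MetricSpace X] : Prop :=
  ∀ ⦃A : Type v⦄ ⦃B : Type w⦄ [MetricSpace A] [MetricSpace B],
    ∀ ι : A → B, Isometry ι → ∀ f : A → X, LipschitzWith 1 f →
      ∃ g : B → X, LipschitzWith 1 g ∧ ∀ a, g (ι a) = f a

/-- The map `l_∞(I) → l_∞(I \ {i})` dropping the `i`-th coordinate. -/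
noncomputable def dropCoord {I : Type u} (i : I) (x : lp (fun _ : I => ℝ) ⊤) :
    lp (fun _ : {j : I // j ≠ i} => ℝ) ⊤ :=
  ⟨fun j => x j.1, memℓp_infty ⟨‖x‖, by
    rintro s ⟨j, rfl⟩
    exact lp.norm_apply_le_norm ENNReal.top_ne_zero x j.1⟩⟩

open Set in
lemma box_fixed_point {I : Type*} (l0 u0 : I → ℝ) (h0 : l0 ≤ u0) (D : ℝ)
    (hD : ∀ i, u0 i - l0 i ≤ D) (T : (I → ℝ) → (I → ℝ))
    (hT : ∀ x ∈ Icc l0 u0, T x ∈ Icc l0 u0)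
    (hne : ∀ x ∈ Icc l0 u0, ∀ y ∈ Icc l0 u0, ∀ c : ℝ, 0 ≤ c → (∀ i, |x i - y i| ≤ c) →
      ∀ i, |T x i - T y i| ≤ c) :
    ∃ x ∈ Icc l0 u0, T x = x := by
  classical
  let S : Set ((I → ℝ) × (I → ℝ)ᵒᵈ) := {p | p.1 ≤ OrderDual.ofDual p.2 ∧ l0 ≤ p.1 ∧
    OrderDual.ofDual p.2 ≤ u0 ∧
    ∀ x ∈ Icc p.1 (OrderDual.ofDual p.2), T x ∈ Icc p.1 (OrderDual.ofDual p.2)}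
  obtain ⟨m, -, hm⟩ := zorn_le_nonempty₀ S (by
    intro c hcS hc y hy
    have : Nonempty c := ⟨⟨y, hy⟩⟩
    have key : ∀ p ∈ c, ∀ q ∈ c, ∀ i, p.1 i ≤ (OrderDual.ofDual q.2) i := by
      intro p hp q hq i
      rcases hc.total hp hq with h | h
      · exact (h.1 i).trans ((hcS hq).1 i)
      · exact ((hcS hp).1 i).trans (h.2 i)
    have bA : ∀ i, BddAbove (range fun p : c => p.1.1 i) := fun i =>
      ⟨_, by rintro _ ⟨p, rfl⟩; exact key p.1 p.2 y hy i⟩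
    have bB : ∀ i, BddBelow (range fun p : c => (OrderDual.ofDual p.1.2) i) := fun i =>
      ⟨_, by rintro _ ⟨p, rfl⟩; exact key y hy p.1 p.2 i⟩
    let l : I → ℝ := fun i => ⨆ p : c, p.1.1 i
    let u : I → ℝ := fun i => ⨅ p : c, (OrderDual.ofDual p.1.2) i
    have hl : ∀ p ∈ c, p.1 ≤ l := fun p hp i => le_ciSup (bA i) (⟨p, hp⟩ : c)
    have hu : ∀ p ∈ c, u ≤ OrderDual.ofDual p.2 := fun p hp i => ciInf_le (bB i) (⟨p, hp⟩ : c)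
    refine ⟨(l, OrderDual.toDual u), ⟨?_, ?_, ?_, ?_⟩, fun p hp => ⟨hl p hp, hu p hp⟩⟩
    · intro i
      exact ciSup_le fun p => le_ciInf fun q => key p.1 p.2 q.1 q.2 i
    · exact (hcS hy).2.1.trans (hl y hy)
    · exact (hu y hy).trans (hcS hy).2.2.1
    · intro x hx
      have : ∀ p ∈ c, T x ∈ Icc p.1 (OrderDual.ofDual p.2) := fun p hp =>
        (hcS hp).2.2.2 x ⟨(hl p hp).trans hx.1, hx.2.trans (hu p hp)⟩
      exact ⟨fun i => ciSup_le fun p => (this p.1 p.2).1 i,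
        fun i => le_ciInf fun p => (this p.1 p.2).2 i⟩)
    (l0, OrderDual.toDual u0) ⟨h0, le_rfl, le_rfl, hT⟩
  obtain ⟨l, u'⟩ := m
  obtain ⟨u, rfl⟩ := OrderDual.toDual.surjective u'
  have hmS := hm.prop
  obtain ⟨hlu, hl0, hu0, hTB⟩ := hmS
  simp only [OrderDual.ofDual_toDual] at hlu hl0 hu0 hTB
  have hmax : ∀ l' u', l ≤ l' → u' ≤ u → l' ≤ u' → (∀ x ∈ Icc l' u', T x ∈ Icc l' u') →
      l' ≤ l ∧ u ≤ u' := by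
    intro l' u' h1 h2 h3 h4
    have := hm.le_of_ge (y := (l', OrderDual.toDual u'))
      ⟨h3, hl0.trans h1, h2.trans hu0, h4⟩ ⟨h1, h2⟩
    exact ⟨this.1, this.2⟩
  have hsub : ∀ x ∈ Icc l u, x ∈ Icc l0 u0 := fun x hx => ⟨hl0.trans hx.1, hx.2.trans hu0⟩
  have hlB : l ∈ Icc l u := ⟨le_rfl, hlu⟩
  refine ⟨l, hsub l hlB, ?_⟩
  rcases isEmpty_or_nonempty I with hI | hI
  · exact Subsingleton.elim _ _
  have hcov : (∀ i C, (∀ x ∈ Icc l u, C ≤ T x i) → C ≤ l i) ∧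
      (∀ i C, (∀ x ∈ Icc l u, T x i ≤ C) → u i ≤ C) := by
    have : Nonempty (Icc l u) := ⟨⟨l, hlB⟩⟩
    have bB : ∀ i, BddBelow (range fun x : Icc l u => T x i) := fun i =>
      ⟨l i, by rintro _ ⟨x, rfl⟩; exact (hTB x.1 x.2).1 i⟩
    have bA : ∀ i, BddAbove (range fun x : Icc l u => T x i) := fun i =>
      ⟨u i, by rintro _ ⟨x, rfl⟩; exact (hTB x.1 x.2).2 i⟩
    have h1 : l ≤ fun i => ⨅ x : Icc l u, T x i := fun i => le_ciInf fun x => (hTB x.1 x.2).1 i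
    have h2 : (fun i => ⨆ x : Icc l u, T x i) ≤ u := fun i => ciSup_le fun x => (hTB x.1 x.2).2 i
    have := hmax (fun i => ⨅ x : Icc l u, T x i) (fun i => ⨆ x : Icc l u, T x i) h1 h2
      (fun i => (ciInf_le (bB i) ⟨l, hlB⟩).trans (le_ciSup (bA i) (⟨l, hlB⟩ : Icc l u)))
      (fun x hx => by
        have hx' : x ∈ Icc l u := ⟨h1.trans hx.1, hx.2.trans h2⟩
        exact ⟨fun i => ciInf_le (bB i) ⟨x, hx'⟩, fun i => le_ciSup (bA i) (⟨x, hx'⟩ : Icc l u)⟩)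
    exact ⟨fun i C h => (le_ciInf fun x : Icc l u => h x.1 x.2).trans (this.1 i),
      fun i C h => (this.2 i).trans (ciSup_le fun x : Icc l u => h x.1 x.2)⟩
  have bW : BddAbove (range fun i => u i - l i) :=
    ⟨D, by rintro _ ⟨i, rfl⟩; have := hD i; have := hl0 i; have := hu0 i; dsimp only; linarith⟩
  set δ := ⨆ i, (u i - l i) with hδ
  have hδi : ∀ i, u i - l i ≤ δ := fun i => le_ciSup bW i
  have hδ0 : 0 ≤ δ := by
    obtain ⟨i⟩ := hI
    have := hδi i; have := hlu i; linarith
  have h5 := hmax (fun i => max (l i) (u i - δ / 2)) (fun i => min (u i) (l i + δ / 2))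
    (fun i => le_max_left _ _) (fun i => min_le_left _ _)
    (fun i => by
      have := hδi i; have := hlu i
      refine max_le (le_min ?_ ?_) (le_min ?_ ?_) <;> linarith)
    (fun x hx => by
      have hx' : x ∈ Icc l u :=
        ⟨fun i => (le_max_left _ _).trans (hx.1 i), fun i => (hx.2 i).trans (min_le_left _ _)⟩
      have hTx := hTB x hx'
      have hclose : ∀ y ∈ Icc l u, ∀ i, |T x i - T y i| ≤ δ / 2 := by
        intro y hy
        refine hne x (hsub x hx') y (hsub y hy) _ (by linarith) fun i => ?_
        have a1 := (le_max_right _ _).trans (hx.1 i)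
        have a2 := (hx.2 i).trans (min_le_right _ _)
        have a3 := hy.1 i
        have a4 := hy.2 i
        rw [abs_le]; constructor <;> linarith
      refine ⟨fun i => max_le (hTx.1 i) ?_, fun i => le_min (hTx.2 i) ?_⟩
      · have := hcov.2 i (T x i + δ / 2) fun y hy => by
          have := abs_le.1 (hclose y hy i); linarith
        linarith
      · have := hcov.1 i (T x i - δ / 2) fun y hy => by
          have := abs_le.1 (hclose y hy i); linarith
        linarith)
  have h6 : δ ≤ δ / 2 := ciSup_le fun i => by
    have := (le_max_right _ _).trans (h5.1 i); linarith
  have h7 : u = l := by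
    funext i
    have := hδi i; have := hlu i; linarith
  subst h7
  have := hTB u hlB
  exact le_antisymm this.2 this.1

lemma linf_dist_le {I : Type*} (x y : lp (fun _ : I => ℝ) ⊤) {c : ℝ} (hc : 0 ≤ c) :
    dist x y ≤ c ↔ ∀ i, |x i - y i| ≤ c := by
  rw [dist_eq_norm]
  constructor
  · intro h i
    have := (lp.norm_apply_le_norm ENNReal.top_ne_zero (x - y) i).trans h
    simpa using this
  · intro h
    exact lp.norm_le_of_forall_le hc fun i => by simpa using h i

lemma linf_coord_le {I : Type*} (x y : lp (fun _ : I => ℝ) ⊤) (i : I) :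
    |x i - y i| ≤ dist x y := (linf_dist_le x y dist_nonneg).1 le_rfl i

lemma dropCoord_dist_le {I : Type*} (i : I) (x y : lp (fun _ : I => ℝ) ⊤) :
    dist (dropCoord i x) (dropCoord i y) ≤ dist x y :=
  (linf_dist_le _ _ dist_nonneg).2 fun j => linf_coord_le x y j.1

lemma lip_real {X : Type*} [MetricSpace X] {r : X → ℝ} (h : LipschitzWith 1 r) (x y : X) :
    |r x - r y| ≤ dist x y := by
  simpa [Real.dist_eq] using h.dist_le_mul x y

lemma clamp_close {a b c a' b' c' k : ℝ} (h1 : |a - a'| ≤ k) (h2 : |b - b'| ≤ k)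
    (h3 : |c - c'| ≤ k) : |max a (min b c) - max a' (min b' c')| ≤ k :=
  (abs_max_sub_max_le_max _ _ _ _).trans
    (max_le h1 ((abs_min_sub_min_le_max _ _ _ _).trans (max_le h2 h3)))

open Set in
lemma hyperconvex_of_constraints {I : Type*} (Q : Set (lp (fun _ : I => ℝ) ⊤))
    (hQ : Q.Nonempty) (L U : Set I)
    (rlo rhi : (i : I) → (lp (fun _ : {j : I // j ≠ i} => ℝ) ⊤ → ℝ))
    (hL : ∀ i ∈ L, LipschitzWith 1 (rlo i)) (hU : ∀ i ∈ U, LipschitzWith 1 (rhi i))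
    (hLU : ∀ i ∈ L ∩ U, ∀ y, rlo i y ≤ rhi i y)
    (hQeq : Q = {x | (∀ i ∈ L, rlo i (dropCoord i x) ≤ x i) ∧
                 (∀ i ∈ U, x i ≤ rhi i (dropCoord i x))})
    (S : Set (lp (fun _ : I => ℝ) ⊤ × ℝ)) (hSQ : ∀ p ∈ S, p.1 ∈ Q) (hS0 : ∀ p ∈ S, 0 ≤ p.2)
    (hS : ∀ p ∈ S, ∀ q ∈ S, dist p.1 q.1 ≤ p.2 + q.2) :
    ∃ z ∈ Q, ∀ p ∈ S, dist z p.1 ≤ p.2 := by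
  classical
  rcases S.eq_empty_or_nonempty with rfl | ⟨p0, hp0⟩
  · obtain ⟨z, hz⟩ := hQ
    exact ⟨z, hz, by simp⟩
  have : Nonempty S := ⟨⟨p0, hp0⟩⟩
  have key : ∀ p ∈ S, ∀ q ∈ S, ∀ i, p.1 i - p.2 ≤ q.1 i + q.2 := by
    intro p hp q hq i
    have := (linf_coord_le p.1 q.1 i).trans (hS p hp q hq)
    have := (abs_le.1 this).2
    linarith
  have bA : ∀ i, BddAbove (range fun p : S => p.1.1 i - p.1.2) := fun i =>
    ⟨_, by rintro _ ⟨p, rfl⟩; exact key p.1 p.2 p0 hp0 i⟩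
  have bB : ∀ i, BddBelow (range fun p : S => p.1.1 i + p.1.2) := fun i =>
    ⟨_, by rintro _ ⟨p, rfl⟩; exact key p0 hp0 p.1 p.2 i⟩
  let l : I → ℝ := fun i => ⨆ p : S, (p.1.1 i - p.1.2)
  let u : I → ℝ := fun i => ⨅ p : S, (p.1.1 i + p.1.2)
  have hl : ∀ p ∈ S, ∀ i, p.1 i - p.2 ≤ l i := fun p hp i => le_ciSup (bA i) (⟨p, hp⟩ : S)
  have hu : ∀ p ∈ S, ∀ i, u i ≤ p.1 i + p.2 := fun p hp i => ciInf_le (bB i) (⟨p, hp⟩ : S)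
  have hlu : l ≤ u := fun i => ciSup_le fun p => le_ciInf fun q => key p.1 p.2 q.1 q.2 i
  have hmem : ∀ x ∈ Icc l u, Memℓp (E := fun _ : I => ℝ) x ⊤ := by
    intro x hx
    refine memℓp_infty ⟨‖p0.1‖ + p0.2, ?_⟩
    rintro _ ⟨i, rfl⟩
    have h1 := abs_le.1 (lp.norm_apply_le_norm ENNReal.top_ne_zero p0.1 i)
    have h2 := (hl p0 hp0 i).trans (hx.1 i)
    have h3 := (hx.2 i).trans (hu p0 hp0 i)
    simp only [Real.norm_eq_abs]
    rw [abs_le]; constructor <;> linarith [h1.1, h1.2]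
  let e : (I → ℝ) → lp (fun _ : I => ℝ) ⊤ := fun x =>
    if h : Memℓp (E := fun _ : I => ℝ) x ⊤ then ⟨x, h⟩ else 0
  have he : ∀ x ∈ Icc l u, ∀ i, e x i = x i := by
    intro x hx i
    simp only [e, dif_pos (hmem x hx)]
  have heball : ∀ x ∈ Icc l u, ∀ p ∈ S, dist (e x) p.1 ≤ p.2 := by
    intro x hx p hp
    refine (linf_dist_le _ _ (hS0 p hp)).2 fun i => ?_
    rw [he x hx]
    have h2 := (hl p hp i).trans (hx.1 i)
    have h3 := (hx.2 i).trans (hu p hp i)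
    rw [abs_le]; constructor <;> linarith
  let lo : (I → ℝ) → I → ℝ := fun x i =>
    if i ∈ L then max (l i) (rlo i (dropCoord i (e x))) else l i
  let hi : (I → ℝ) → I → ℝ := fun x i =>
    if i ∈ U then min (u i) (rhi i (dropCoord i (e x))) else u i
  have hlo1 : ∀ x i, l i ≤ lo x i := by
    intro x i; simp only [lo]; split_ifs
    · exact le_max_left _ _
    · exact le_rfl
  have hhi1 : ∀ x i, hi x i ≤ u i := by
    intro x i; simp only [hi]; split_ifs
    · exact min_le_left _ _
    · exact le_rfl
  have hrlo : ∀ x ∈ Icc l u, ∀ i ∈ L, rlo i (dropCoord i (e x)) ≤ u i := by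
    intro x hx i hi
    refine le_ciInf fun p => ?_
    have h1 := hSQ p.1 p.2
    rw [hQeq] at h1
    have h2 := h1.1 i hi
    have h3 := (lip_real (hL i hi) (dropCoord i (e x)) (dropCoord i p.1.1)).trans
      ((dropCoord_dist_le i _ _).trans (heball x hx p.1 p.2))
    have := (abs_le.1 h3).2
    linarith
  have hrhi : ∀ x ∈ Icc l u, ∀ i ∈ U, l i ≤ rhi i (dropCoord i (e x)) := by
    intro x hx i hi
    refine ciSup_le fun p => ?_
    have h1 := hSQ p.1 p.2
    rw [hQeq] at h1
    have h2 := h1.2 i hi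
    have h3 := (lip_real (hU i hi) (dropCoord i (e x)) (dropCoord i p.1.1)).trans
      ((dropCoord_dist_le i _ _).trans (heball x hx p.1 p.2))
    have := (abs_le.1 h3).1
    linarith
  have hlohi : ∀ x ∈ Icc l u, ∀ i, lo x i ≤ hi x i := by
    intro x hx i
    simp only [lo, hi]
    split_ifs with h1 h2 h2
    · exact max_le (le_min (hlu i) (hrhi x hx i h2))
        (le_min (hrlo x hx i h1) (hLU i ⟨h1, h2⟩ _))
    · exact max_le (hlu i) (hrlo x hx i h1)
    · exact le_min (hlu i) (hrhi x hx i h2)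
    · exact hlu i
  obtain ⟨x, hx, hfix⟩ := box_fixed_point l u hlu (2 * p0.2)
    (fun i => by linarith [hl p0 hp0 i, hu p0 hp0 i])
    (fun x i => max (lo x i) (min (x i) (hi x i)))
    (fun x hx => ⟨fun i => (hlo1 x i).trans (le_max_left _ _),
      fun i => max_le ((hlohi x hx i).trans (hhi1 x i)) ((min_le_right _ _).trans (hhi1 x i))⟩)
    (by
      intro x hx y hy c hc hxy i
      have hexy : dist (e x) (e y) ≤ c := (linf_dist_le _ _ hc).2 fun j => by
        rw [he x hx, he y hy]; exact hxy j
      have hd := (dropCoord_dist_le i (e x) (e y)).trans hexy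
      refine clamp_close ?_ (hxy i) ?_
      · simp only [lo]
        split_ifs with h
        · refine (abs_max_sub_max_le_max _ _ _ _).trans (max_le (by simpa using hc) ?_)
          exact (lip_real (hL i h) _ _).trans hd
        · simpa using hc
      · simp only [hi]
        split_ifs with h
        · refine (abs_min_sub_min_le_max _ _ _ _).trans (max_le (by simpa using hc) ?_)
          exact (lip_real (hU i h) _ _).trans hd
        · simpa using hc)
  refine ⟨e x, ?_, heball x hx⟩
  have hb : ∀ i, lo x i ≤ x i ∧ x i ≤ hi x i := by
    intro i
    have h1 : max (lo x i) (min (x i) (hi x i)) = x i := congrFun hfix i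
    refine ⟨h1 ▸ le_max_left _ _, ?_⟩
    rw [← h1]
    exact max_le (hlohi x hx i) (min_le_right _ _)
  rw [hQeq]
  refine ⟨fun i hi' => ?_, fun i hi' => ?_⟩
  · rw [he x hx]
    have := (hb i).1
    simp only [lo, if_pos hi'] at this
    exact (le_max_right _ _).trans this
  · rw [he x hx]
    have := (hb i).2
    simp only [hi, if_pos hi'] at this
    exact this.trans (min_le_right _ _)

lemma injective_of_hyperconvex {X : Type*} [MetricSpace X] (Q : Set X)
    (h : ∀ S : Set (X × ℝ), (∀ p ∈ S, p.1 ∈ Q) → (∀ p ∈ S, 0 ≤ p.2) →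
      (∀ p ∈ S, ∀ q ∈ S, dist p.1 q.1 ≤ p.2 + q.2) → ∃ z ∈ Q, ∀ p ∈ S, dist z p.1 ≤ p.2) :
    IsInjectiveMetricSpace Q := by
  intro A B _ _ ι hι f hf
  let 𝒢 : Set (Set (B × Q)) := {G | ∀ p ∈ G, ∀ q ∈ G, dist p.2 q.2 ≤ dist p.1 q.1}
  obtain ⟨G, hG0, hG⟩ := zorn_subset_nonempty 𝒢 (by
    intro c hc hchain _
    refine ⟨⋃₀ c, ?_, fun s hs => Set.subset_sUnion_of_mem hs⟩
    rintro p ⟨s, hs, hps⟩ q ⟨t, ht, hqt⟩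
    rcases hchain.total hs ht with hst | hst
    · exact hc ht p (hst hps) q hqt
    · exact hc hs p hps q (hst hqt))
    (Set.range fun a => (ι a, f a)) (by
      rintro _ ⟨a, rfl⟩ _ ⟨b, rfl⟩
      dsimp only
      rw [hι.dist_eq]
      simpa using hf.dist_le_mul a b)
  have hGp := hG.prop
  have htot : ∀ b : B, ∃ q : Q, (b, q) ∈ G := by
    intro b
    obtain ⟨z, hz, hzd⟩ := h ((fun p : B × Q => ((p.2 : X), dist b p.1)) '' G)
      (by rintro _ ⟨p, hp, rfl⟩; exact p.2.2)
      (by rintro _ ⟨p, hp, rfl⟩; exact dist_nonneg)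
      (by
        rintro _ ⟨p, hp, rfl⟩ _ ⟨q, hq, rfl⟩
        exact (hGp p hp q hq).trans (dist_triangle_left _ _ _))
    have hzd' : ∀ p ∈ G, dist (⟨z, hz⟩ : Q) p.2 ≤ dist b p.1 := fun p hp =>
      hzd _ ⟨p, hp, rfl⟩
    refine ⟨⟨z, hz⟩, ?_⟩
    have hins : insert (b, (⟨z, hz⟩ : Q)) G ∈ 𝒢 := by
      rintro p (rfl | hp) q (rfl | hq)
      · simp
      · exact hzd' q hq
      · rw [dist_comm, dist_comm p.1]; exact hzd' p hp
      · exact hGp p hp q hq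
    exact hG.le_of_ge hins (Set.subset_insert _ _) (Set.mem_insert _ _)
  choose g hg using htot
  refine ⟨g, LipschitzWith.of_dist_le_mul fun a b => ?_, fun a => ?_⟩
  · simpa using hGp _ (hg a) _ (hg b)
  · have := hGp _ (hg (ι a)) _ (hG0 ⟨a, rfl⟩)
    simpa using this

open Classical in
/-- Insert the value `t` at coordinate `i`. -/
noncomputable def insCoord {I : Type*} (i : I) (y : lp (fun _ : {j : I // j ≠ i} => ℝ) ⊤)
    (t : ℝ) : lp (fun _ : I => ℝ) ⊤ :=
  ⟨fun j => if h : j = i then t else y ⟨j, h⟩, memℓp_infty ⟨max |t| ‖y‖, by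
    rintro s ⟨j, rfl⟩
    dsimp only
    split_ifs with h
    · exact le_max_left _ _
    · exact (lp.norm_apply_le_norm ENNReal.top_ne_zero y ⟨j, h⟩).trans (le_max_right _ _)⟩⟩

lemma insCoord_drop {I : Type*} (i : I) (x : lp (fun _ : I => ℝ) ⊤) :
    insCoord i (dropCoord i x) (x i) = x := by
  ext j
  simp only [insCoord, dropCoord]
  split_ifs with h
  · rw [h]
  · rfl

lemma insCoord_dist_le {I : Type*} (i : I) (y y' : lp (fun _ : {j : I // j ≠ i} => ℝ) ⊤)
    (t t' c : ℝ) (h1 : dist y y' ≤ c) (h2 : |t - t'| ≤ c) :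
    dist (insCoord i y t) (insCoord i y' t') ≤ c := by
  refine (linf_dist_le _ _ (dist_nonneg.trans h1)).2 fun j => ?_
  simp only [insCoord]
  split_ifs with h
  · exact h2
  · exact (linf_coord_le y y' _).trans h1

open Set in
lemma constraints_of_retraction {I : Type*} (Q : Set (lp (fun _ : I => ℝ) ⊤)) (hQ : Q.Nonempty)
    (ρ : lp (fun _ : I => ℝ) ⊤ → lp (fun _ : I => ℝ) ⊤)
    (hρ : ∀ x y, dist (ρ x) (ρ y) ≤ dist x y) (hfix : ∀ x, x ∈ Q ↔ ρ x = x) :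
    ∃ (L U : Set I)
        (rlo rhi : (i : I) → (lp (fun _ : {j : I // j ≠ i} => ℝ) ⊤ → ℝ)),
        (∀ i ∈ L, LipschitzWith 1 (rlo i)) ∧
        (∀ i ∈ U, LipschitzWith 1 (rhi i)) ∧
        (∀ i ∈ L ∩ U, ∀ y, rlo i y ≤ rhi i y) ∧
        Q = {x | (∀ i ∈ L, rlo i (dropCoord i x) ≤ x i) ∧
                 (∀ i ∈ U, x i ≤ rhi i (dropCoord i x))} := by
  obtain ⟨q, hq⟩ := hQ
  let F : (i : I) → (lp (fun _ : {j : I // j ≠ i} => ℝ) ⊤) → Set ℝ :=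
    fun i y => {t | ρ (insCoord i y t) i = t}
  have hlip : ∀ i y y' t t' c, dist y y' ≤ c → |t - t'| ≤ c →
      |ρ (insCoord i y t) i - ρ (insCoord i y' t') i| ≤ c := fun i y y' t t' c h1 h2 =>
    (linf_coord_le _ _ i).trans ((hρ _ _).trans (insCoord_dist_le i y y' t t' c h1 h2))
  have hcont : ∀ i y, Continuous fun t => ρ (insCoord i y t) i := by
    intro i y
    refine (LipschitzWith.of_dist_le_mul (K := 1) fun t t' => ?_).continuous
    rw [Real.dist_eq, NNReal.coe_one, one_mul]
    exact hlip i y y t t' _ (by simp) (le_of_eq (Real.dist_eq _ _).symm)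
  have hmove : ∀ i y y', ∀ t ∈ F i y, ∃ t' ∈ F i y', |t - t'| ≤ dist y y' := by
    intro i y y' t ht
    set d := dist y y' with hd
    have hd0 : 0 ≤ d := dist_nonneg
    have hb : ∀ s, |t - s| ≤ d → |t - ρ (insCoord i y' s) i| ≤ d := by
      intro s hs
      have := hlip i y y' t s d le_rfl hs
      rwa [show ρ (insCoord i y t) i = t from ht] at this
    have hc : ContinuousOn (fun s => ρ (insCoord i y' s) i - s) (Icc (t - d) (t + d)) :=
      ((hcont i y').sub continuous_id).continuousOn
    have := intermediate_value_Icc' (by linarith) hc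
    obtain ⟨s, hs, hs0⟩ := this (show (0 : ℝ) ∈ _ from by
      have h1 := abs_le.1 (hb (t - d) (by rw [abs_le]; constructor <;> linarith))
      have h2 := abs_le.1 (hb (t + d) (by rw [abs_le]; constructor <;> linarith))
      constructor <;> linarith [h1.1, h1.2, h2.1, h2.2])
    refine ⟨s, by simp only [F, mem_ofPred_eq]; dsimp only at hs0; linarith, ?_⟩
    rw [abs_le]; constructor <;> linarith [hs.1, hs.2]
  have hne : ∀ i y, (F i y).Nonempty := by
    intro i y
    obtain ⟨t, ht, -⟩ := hmove i (dropCoord i q) y (q i) (by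
      simp only [F, mem_ofPred_eq, insCoord_drop, (hfix q).1 hq])
    exact ⟨t, ht⟩
  have hclosed : ∀ i y, IsClosed (F i y) := fun i y => isClosed_eq (hcont i y) continuous_id
  have hbelow : ∀ i y y', BddBelow (F i y) → BddBelow (F i y') := by
    rintro i y y' ⟨b, hb⟩
    refine ⟨b - dist y' y, fun t ht => ?_⟩
    obtain ⟨t', ht', h⟩ := hmove i y' y t ht
    have := hb ht'
    linarith [(abs_le.1 h).1]
  have habove : ∀ i y y', BddAbove (F i y) → BddAbove (F i y') := by
    rintro i y y' ⟨b, hb⟩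
    refine ⟨b + dist y' y, fun t ht => ?_⟩
    obtain ⟨t', ht', h⟩ := hmove i y' y t ht
    have := hb ht'
    linarith [(abs_le.1 h).2]
  have hord : ∀ i y s t r, s ∈ F i y → r ∈ F i y → s ≤ t → t ≤ r → t ∈ F i y := by
    intro i y s t r hs hr h1 h2
    have a1 := hlip i y y t s (t - s) (by simpa using h1) (by rw [abs_of_nonneg]; linarith)
    have a2 := hlip i y y r t (r - t) (by simpa using h2) (by rw [abs_of_nonneg]; linarith)
    rw [show ρ (insCoord i y s) i = s from hs] at a1
    rw [show ρ (insCoord i y r) i = r from hr] at a2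
    change ρ (insCoord i y t) i = t
    linarith [(abs_le.1 a1).2, (abs_le.1 a2).2]
  refine ⟨{i | BddBelow (F i (dropCoord i q))}, {i | BddAbove (F i (dropCoord i q))},
    fun i y => sInf (F i y), fun i y => sSup (F i y), ?_, ?_, ?_, ?_⟩
  · intro i hi
    refine LipschitzWith.of_le_add fun y y' => ?_
    rw [← sub_le_iff_le_add]
    refine le_csInf (hne i y') fun t ht => ?_
    obtain ⟨t', ht', h⟩ := hmove i y' y t ht
    have := csInf_le (hbelow i _ y hi) ht'
    rw [dist_comm] at h
    linarith [(abs_le.1 h).1]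
  · intro i hi
    refine LipschitzWith.of_le_add fun y y' => ?_
    refine csSup_le (hne i y) fun t ht => ?_
    obtain ⟨t', ht', h⟩ := hmove i y y' t ht
    have := le_csSup (habove i _ y' hi) ht'
    linarith [(abs_le.1 h).2]
  · rintro i ⟨hi, hi'⟩ y
    obtain ⟨t, ht⟩ := hne i y
    exact (csInf_le (hbelow i _ y hi) ht).trans (le_csSup (habove i _ y hi') ht)
  · have hQF : ∀ x, x ∈ Q ↔ ∀ i, x i ∈ F i (dropCoord i x) := by
      intro x
      rw [hfix]
      simp only [F, mem_ofPred_eq, insCoord_drop]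
      exact ⟨fun h i => by rw [h], fun h => by ext i; exact h i⟩
    ext x
    rw [hQF]
    constructor
    · intro h
      exact ⟨fun i hi => csInf_le (hbelow i _ _ hi) (h i),
        fun i hi => le_csSup (habove i _ _ hi) (h i)⟩
    · rintro ⟨h1, h2⟩ i
      have hs : ∃ s ∈ F i (dropCoord i x), s ≤ x i := by
        by_cases hi : BddBelow (F i (dropCoord i x))
        · exact ⟨_, (hclosed i _).csInf_mem (hne i _) hi, h1 i (hbelow i _ _ hi)⟩
        · obtain ⟨s, hs, hlt⟩ := not_bddBelow_iff.1 hi (x i)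
          exact ⟨s, hs, hlt.le⟩
      have hr : ∃ r ∈ F i (dropCoord i x), x i ≤ r := by
        by_cases hi : BddAbove (F i (dropCoord i x))
        · exact ⟨_, (hclosed i _).csSup_mem (hne i _) hi, h2 i (habove i _ _ hi)⟩
        · obtain ⟨s, hs, hlt⟩ := not_bddAbove_iff.1 hi (x i)
          exact ⟨s, hs, hlt.le⟩
      obtain ⟨s, hs, hsx⟩ := hs
      obtain ⟨r, hr, hrx⟩ := hr
      exact hord i _ s _ r hs hr hsx hrx

/-- A non-empty subset `Q` of `l_∞(I)` is injective (with the induced metric) if and only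
if it is cut out by a family of inequalities `r̲_i(π̂_i x) ≤ x_i ≤ r̄_i(π̂_i x)` given by
`1`-Lipschitz functions, where lower bounds are imposed for `i ∈ L` and upper bounds for
`i ∈ U`, and `r̲_i ≤ r̄_i` whenever both are imposed. -/
theorem injective_subset_linf_iff {I : Type u}
    (Q : Set (lp (fun _ : I => ℝ) ⊤)) (hQ : Q.Nonempty) :
    IsInjectiveMetricSpace.{u, u, u} Q ↔
      ∃ (L U : Set I)
        (rlo rhi : (i : I) → (lp (fun _ : {j : I // j ≠ i} => ℝ) ⊤ → ℝ)),
        (∀ i ∈ L, LipschitzWith 1 (rlo i)) ∧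
        (∀ i ∈ U, LipschitzWith 1 (rhi i)) ∧
        (∀ i ∈ L ∩ U, ∀ y, rlo i y ≤ rhi i y) ∧
        Q = {x | (∀ i ∈ L, rlo i (dropCoord i x) ≤ x i) ∧
                 (∀ i ∈ U, x i ≤ rhi i (dropCoord i x))} := by
  constructor
  · intro h
    obtain ⟨g, hg, hgf⟩ := h (A := Q) (B := lp (fun _ : I => ℝ) ⊤) Subtype.val
      isometry_subtype_coe id LipschitzWith.id
    refine constraints_of_retraction Q hQ (fun x => (g x : lp (fun _ : I => ℝ) ⊤)) ?_ ?_
    · intro x y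
      have h1 := hg.dist_le_mul x y
      rw [NNReal.coe_one, one_mul] at h1
      exact h1
    · intro x
      constructor
      · intro hx
        exact congrArg Subtype.val (hgf ⟨x, hx⟩)
      · intro hx
        rw [← hx]
        exact (g x).2
  · rintro ⟨L, U, rlo, rhi, hL, hU, hLU, hQeq⟩
    exact injective_of_hyperconvex Q fun S =>
      hyperconvex_of_constraints Q hQ L U rlo rhi hL hU hLU hQeq S
end

section
/- Let I be a set and let V be a linear subspace of l_∞(I) of codimension one. If there exists i ∈ I such that V ∩ ( Int(C_i) ∪ Int(−C_i) ) = ∅, where Int(C_i) = { x ∈ l_∞(I) : x_i > sup_{j∈I∖{i}} |x_j| } and Int(−C_i) = { x ∈ l_∞(I) : −x_i > sup_{j∈I∖{i}} |x_j| }, then V is injective as a metric space with the induced metric. -/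
universe u v w

/-- If a codimension-one linear subspace `V` of `l_∞(I)` avoids, for some coordinate
`i ∈ I`, the interiors of the cones `C_i` and `-C_i`, where
`Int(C_i) = {x : x_i > sup_{j ≠ i} |x_j|}` and `Int(-C_i) = {x : -x_i > sup_{j ≠ i} |x_j|}`,
then `V` is injective with the induced metric. -/
theorem injective_codim_one_of_exists_coord {I : Type u}
    (V : Submodule ℝ (lp (fun _ : I => ℝ) ⊤))
    (hcodim : Module.finrank ℝ ((lp (fun _ : I => ℝ) ⊤) ⧸ V) = 1)
    (hcone : ∃ i : I, (V : Set (lp (fun _ : I => ℝ) ⊤)) ∩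
      ({x | (⨆ j : {j : I // j ≠ i}, |x j.1|) < x i} ∪
        {x | (⨆ j : {j : I // j ≠ i}, |x j.1|) < -x i}) = ∅) :
    IsInjectiveMetricSpace.{u, v, w} V := by
  classical
  obtain ⟨i, hi⟩ := hcone
  have key : ∀ x ∈ V, ∀ c : ℝ, 0 ≤ c → (∀ j, j ≠ i → |x j| ≤ c) → ‖x‖ ≤ c := by
    intro x hx c hc h
    have hs : (⨆ j : {j : I // j ≠ i}, |x j.1|) ≤ c :=
      Real.iSup_le (fun j => h j.1 j.2) hc
    have hn : x ∉ ({x | (⨆ j : {j : I // j ≠ i}, |x j.1|) < x i} ∪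
        {x | (⨆ j : {j : I // j ≠ i}, |x j.1|) < -x i} :
          Set (lp (fun _ : I => ℝ) ⊤)) := by
      intro h'
      have : x ∈ (∅ : Set (lp (fun _ : I => ℝ) ⊤)) := hi ▸ ⟨hx, h'⟩
      exact this
    simp only [Set.mem_union, Set.mem_setOf_eq, not_or, not_lt] at hn
    refine lp.norm_le_of_forall_le hc fun j => ?_
    rw [Real.norm_eq_abs]
    by_cases hj : j = i
    · subst hj
      rw [abs_le]
      constructor <;> linarith [hn.1, hn.2]
    · exact h j hj
  let e : lp (fun _ : I => ℝ) ⊤ := lp.single ⊤ i (1 : ℝ)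
  have ei : e i = 1 := by simp [e]
  have ej : ∀ j, j ≠ i → e j = 0 := by
    intro j hj
    simp [e, hj]
  have heV : e ∉ V := by
    intro h
    have h0 := key e h 0 le_rfl (fun j hj => by simp [ej j hj])
    have h1 : e = 0 := norm_le_zero_iff.mp h0
    rw [h1] at ei
    simp at ei
  have hex : ∀ x : lp (fun _ : I => ℝ) ⊤, ∃ t : ℝ, x - t • e ∈ V := by
    intro x
    have hne : V.mkQ e ≠ 0 := by simpa using heV
    obtain ⟨t, ht⟩ := exists_smul_eq_of_finrank_eq_one hcodim hne (V.mkQ x)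
    refine ⟨t, ?_⟩
    rw [← Submodule.Quotient.mk_eq_zero, ← Submodule.mkQ_apply, map_sub, map_smul, ht, sub_self]
  choose t ht using hex
  intro A B _ _ ι hι f hf
  let F : B → lp (fun _ : I => ℝ) ⊤ := Function.extend ι (fun a => (f a : lp (fun _ : I => ℝ) ⊤)) 0
  have hF : ∀ a, F (ι a) = f a := fun a => hι.injective.extend_apply _ _ a
  have hFl : LipschitzOnWith 1 F (Set.range ι) := by
    apply LipschitzOnWith.of_dist_le_mul
    rintro _ ⟨a, rfl⟩ _ ⟨b, rfl⟩
    rw [hF, hF, hι.dist_eq]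
    exact hf.dist_le_mul a b
  obtain ⟨G, hG, hGF⟩ := hFl.extend_lp_infty
  have main : ∀ x y : lp (fun _ : I => ℝ) ⊤, x ∈ V → y ∈ V → ∀ u v : lp (fun _ : I => ℝ) ⊤,
      (∀ j, j ≠ i → x j = u j) → (∀ j, j ≠ i → y j = v j) → dist x y ≤ dist u v := by
    intro x y hx hy u v hu hv
    rw [dist_eq_norm, dist_eq_norm]
    refine key _ (V.sub_mem hx hy) _ (norm_nonneg _) fun j hj => ?_
    have := lp.norm_apply_le_norm ENNReal.top_ne_zero (u - v) j
    simpa [hu j hj, hv j hj] using this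
  have hp : ∀ x : lp (fun _ : I => ℝ) ⊤, ∀ j, j ≠ i → (x - t x • e) j = x j := by
    intro x j hj
    change x j - t x * e j = x j
    rw [ej j hj, mul_zero, sub_zero]
  refine ⟨fun b => ⟨G b - t (G b) • e, ht _⟩, ?_, ?_⟩
  · apply LipschitzWith.of_dist_le_mul
    intro a b
    exact (main _ _ (ht _) (ht _) _ _ (hp _) (hp _)).trans (hG.dist_le_mul a b)
  · intro a
    have h1 : G (ι a) = f a := by rw [← hGF ⟨a, rfl⟩, hF]
    apply Subtype.ext
    apply dist_le_zero.mp
    have := main _ _ (ht (G (ι a))) (f a).2 _ (f a : lp (fun _ : I => ℝ) ⊤) (hp _) (fun _ _ => rfl)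
    rw [h1, dist_self] at this
    simpa only [h1] using this
end
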